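/- arXiv:math/0110255 — 5 statements merged into one kernel-verified Lean document; each statement's English description precedes it below -/
import Mathlib

section
/- Let C be the multiplicative monoid of polynomials in ℤ[t] with positive leading coefficient. Then there exists an index type ι and a ring isomorphism between the monoid ring ℤ[C] and the multivariate polynomial ring ℤ[x_i : i ∈ ι]. -/
/-- The multiplicative monoid of polynomials in `ℤ[t]` with positive leading
coefficient, as a submonoid of the multiplicative monoid of `ℤ[t]`. -/
noncomputable def posLeadingCoeff : Submonoid (Polynomial ℤ) where
  carrier := {p | 0 < p.leadingCoeff}
  one_mem' := by simp only [Set.mem_setOf_eq, Polynomial.leadingCoeff_one]; exact one_pos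
  mul_mem' := fun {p q} hp hq => by
    simp only [Set.mem_setOf_eq, Polynomial.leadingCoeff_mul] at *
    exact mul_pos hp hq

/-!
Sign normalization picks one representative in each class of nonzero associates of `ℤ[t]`, and the
representatives are exactly the polynomials with positive leading coefficient. Unique factorization
in `ℤ[t]` therefore makes `C` a free commutative monoid on its irreducible elements. The monoid
algebra of a free commutative monoid is a polynomial ring, its monomials being the monoid elements.
-/

/-- The nonzero elements of `R` fixed by `normalize`: one chosen representative of each class of
nonzero associates. Closure under multiplication is what `StrongNormalizationMonoid` provides. -/
def normalizedSubmonoid (R : Type*) [CommMonoidWithZero R] [NoZeroDivisors R] [Nontrivial R]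
    [StrongNormalizationMonoid R] : Submonoid R where
  carrier := {a | a ≠ 0 ∧ normalize a = a}
  one_mem' := ⟨one_ne_zero, normalize_one⟩
  mul_mem' ha hb := ⟨mul_ne_zero ha.1 hb.1, by rw [normalize_mul, ha.2, hb.2]⟩

namespace normalizedSubmonoid

open UniqueFactorizationMonoid

section NoZeroDivisors

variable (R : Type*) [CommMonoidWithZero R] [NoZeroDivisors R] [Nontrivial R]
  [StrongNormalizationMonoid R]

/-- The normalized irreducible elements of `R`, which form a basis of the monoid
`normalizedSubmonoid R` when `R` has unique factorization. Irreducibility is required in `R`. -/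
abbrev IrreducibleElement : Type _ :=
  {p : normalizedSubmonoid R // Irreducible (p : R)}

/-- The product of a multiset of normalized irreducible elements, as a homomorphism from the free
commutative monoid on them. Additive notation on the target matches `Multiset` and `Finsupp`. -/
def multisetProd :
    Multiset (IrreducibleElement R) →+ Additive (normalizedSubmonoid R) where
  toFun s := .ofMul (s.map Subtype.val).prod
  map_zero' := by simp
  map_add' s t := by simp

variable {R}

theorem coe_multisetProd (s : Multiset (IrreducibleElement R)) :
    ((multisetProd R s).toMul : R) = (s.map fun p ↦ (p.1 : R)).prod := by
  simp [multisetProd]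

end NoZeroDivisors

section UniqueFactorizationMonoid

variable {R : Type*} [CommMonoidWithZero R] [Nontrivial R] [UniqueFactorizationMonoid R]
  [StrongNormalizationMonoid R]

theorem normalizedFactors_multisetProd (s : Multiset (IrreducibleElement R)) :
    normalizedFactors ((multisetProd R s).toMul : R) = s.map fun p ↦ (p.1 : R) := by
  have irreducible_of_mem : ∀ a ∈ s.map fun p ↦ (p.1 : R), Irreducible a :=
    Multiset.forall_mem_map_iff.mpr fun p _ ↦ p.2
  rw [coe_multisetProd, normalizedFactors_prod_eq _ irreducible_of_mem, Multiset.map_map]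
  exact Multiset.map_congr rfl fun p _ ↦ p.1.2.2

theorem multisetProd_injective : Function.Injective (multisetProd R) := by
  intro s t hst
  apply Multiset.map_injective (Subtype.val_injective.comp Subtype.val_injective)
  calc s.map (fun p ↦ (p.1 : R))
      = normalizedFactors ((multisetProd R s).toMul : R) := (normalizedFactors_multisetProd s).symm
    _ = normalizedFactors ((multisetProd R t).toMul : R) := by rw [hst]
    _ = t.map (fun p ↦ (p.1 : R)) := normalizedFactors_multisetProd t

theorem exists_map_coe_eq_normalizedFactors (a : R) :
    ∃ s : Multiset (IrreducibleElement R), s.map (fun p ↦ (p.1 : R)) = normalizedFactors a := by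
  refine ⟨(normalizedFactors a).attach.map fun q ↦
    have irreducible_q := irreducible_of_normalized_factor q.1 q.2
    ⟨⟨q.1, irreducible_q.ne_zero, normalize_normalized_factor q.1 q.2⟩, irreducible_q⟩, ?_⟩
  rw [Multiset.map_map]
  exact Multiset.attach_map_val _

theorem multisetProd_surjective : Function.Surjective (multisetProd R) := by
  intro a
  obtain ⟨a_ne_zero, normalize_a⟩ := a.toMul.2
  obtain ⟨s, hs⟩ := exists_map_coe_eq_normalizedFactors (a.toMul : R)
  refine ⟨s, Additive.toMul.injective (Subtype.ext ?_)⟩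
  rw [coe_multisetProd, hs, prod_normalizedFactors_eq a_ne_zero, normalize_a]

open scoped Classical in
variable (R) in
/-- Unique factorization: `normalizedSubmonoid R` is the free commutative monoid on its irreducible
elements, a factorization being encoded by its exponents. -/
noncomputable def additiveEquivFinsupp :
    Additive (normalizedSubmonoid R) ≃+ (IrreducibleElement R →₀ ℕ) :=
  (AddEquiv.ofBijective (multisetProd R)
    ⟨multisetProd_injective, multisetProd_surjective⟩).symm.trans Multiset.toFinsupp

end UniqueFactorizationMonoid

end normalizedSubmonoid

theorem monoidAlgebra_posLeadingCoeff_iso_mvPolynomial_general (A R : Type*) [CommSemiring A]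
    [CommMonoidWithZero R] [Nontrivial R] [UniqueFactorizationMonoid R]
    [StrongNormalizationMonoid R] :
    Nonempty (MonoidAlgebra A (normalizedSubmonoid R) ≃ₐ[A]
      MvPolynomial (normalizedSubmonoid.IrreducibleElement R) A) :=
  ⟨(MonoidAlgebra.toAdditiveAlgEquiv A A _).trans
    (AddMonoidAlgebra.domCongr A A (normalizedSubmonoid.additiveEquivFinsupp R))⟩

theorem normalize_eq_self_iff_normalize_leadingCoeff_eq_self {R : Type*} [CommRing R]
    [IsDomain R] [NormalizationMonoid R] {p : Polynomial R} :
    normalize p = p ↔ normalize p.leadingCoeff = p.leadingCoeff := by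
  refine ⟨fun h ↦ by rw [← Polynomial.leadingCoeff_normalize, h], fun h ↦ ?_⟩
  obtain rfl | p_ne_zero := eq_or_ne p 0
  · exact normalize_zero
  have normUnit_eq_one : (normUnit p.leadingCoeff : R) = 1 :=
    (mul_eq_left₀ (Polynomial.leadingCoeff_ne_zero.mpr p_ne_zero)).mp h
  rw [normalize_apply, Polynomial.coe_normUnit, normUnit_eq_one, Polynomial.C_1, mul_one]

theorem normalizedSubmonoid_polynomial_int :
    normalizedSubmonoid (Polynomial ℤ) = posLeadingCoeff := by
  ext p
  change p ≠ 0 ∧ normalize p = p ↔ 0 < p.leadingCoeff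
  rw [normalize_eq_self_iff_normalize_leadingCoeff_eq_self, Int.nonneg_iff_normalize_eq_self,
    ← Polynomial.leadingCoeff_ne_zero, and_comm, ← lt_iff_le_and_ne']

/-- The monoid ring `ℤ[C]`, where `C` is the multiplicative monoid of integer
polynomials with positive leading coefficient, is isomorphic as a ring to a
multivariate polynomial ring over `ℤ` in some set of variables. -/
theorem monoidAlgebra_posLeadingCoeff_iso_mvPolynomial :
    ∃ ι : Type, Nonempty (MonoidAlgebra ℤ posLeadingCoeff ≃+* MvPolynomial ι ℤ) := by
  rw [← normalizedSubmonoid_polynomial_int]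
  exact ⟨_, (monoidAlgebra_posLeadingCoeff_iso_mvPolynomial_general ℤ (Polynomial ℤ)).map
    AlgEquiv.toRingEquiv⟩
end

section
/- Let K be a field and let f = Σ_{i≥0} a_i t^i be a formal power series with coefficients a_i ∈ K. Then f is a rational function (i.e. there exist polynomials P, Q ∈ K[t] with Q ≠ 0 such that Q·f = P as power series) if and only if there exist n > 0 and n₀ > 0 such that for every m > n₀ the determinant of the (n+1)×(n+1) Hankel matrix whose (i,j)-entry (0 ≤ i,j ≤ n) is a_{m+i+j} is zero. -/
/-!
Rationality of `f` means that the coefficients of `f` eventually satisfy a linear recurrence, whose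
characteristic polynomial is the reflection of the denominator. Such a recurrence is a common kernel
vector of all Hankel matrices of a fixed larger size and large starting index. Conversely, take the
least size `k + 1` whose Hankel determinants eventually vanish. If the determinants of sizes `k` and
`k + 1` both vanish at `m`, then so does the one of size `k` at `m + 1`; by minimality the
determinants of size `k` are therefore eventually nonzero. Hence the last row of a Hankel matrix of
size `k + 1` depends on the others, so a kernel vector at `m` is still one at `m + 1`.
-/

open Filter Matrix Polynomial

section Matrix

variable {R : Type*}

lemma submatrix_castSucc_mulVec [NonUnitalNonAssocSemiring R] {k : ℕ} {m n : Type*}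
    (A : Matrix m (Fin (k + 1)) R) (f : n → m) (u : Fin k → R) (i : n) :
    (A.submatrix f Fin.castSucc *ᵥ u) i = (A *ᵥ Fin.snoc u 0) (f i) := by
  simp [mulVec, dotProduct, Fin.sum_univ_castSucc]

variable [CommRing R]

lemma ne_zero_of_vecMul_eq_zero_of_det_submatrix_ne_zero [NoZeroDivisors R] {k : ℕ}
    {A : Matrix (Fin (k + 1)) (Fin (k + 1)) R} {p : Fin (k + 1)} {e : Fin k → Fin (k + 1)}
    (hB : (A.submatrix p.succAbove e).det ≠ 0) {v : Fin (k + 1) → R} (hv : v ≠ 0)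
    (hvA : v ᵥ* A = 0) : v p ≠ 0 := by
  intro hvp
  have hrest : v ∘ p.succAbove = 0 := by
    refine eq_zero_of_vecMul_eq_zero hB (funext fun j => ?_)
    simpa [vecMul, dotProduct, Fin.sum_univ_succAbove _ p, hvp] using congrFun hvA (e j)
  exact hv (funext ((Fin.forall_iff_succAbove p).2 ⟨hvp, congrFun hrest⟩))

/-- Over the fraction field, the hypotheses say that row `p` is a combination of the others. -/
lemma mulVec_eq_zero_of_det_submatrix_ne_zero [IsDomain R] {k : ℕ}
    {A : Matrix (Fin (k + 1)) (Fin (k + 1)) R} (hA : A.det = 0) {p : Fin (k + 1)}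
    {e : Fin k → Fin (k + 1)} (hB : (A.submatrix p.succAbove e).det ≠ 0) {w : Fin (k + 1) → R}
    (hw : ∀ i, (A *ᵥ w) (p.succAbove i) = 0) : A *ᵥ w = 0 := by
  obtain ⟨v, hv, hvA⟩ := exists_vecMul_eq_zero_iff.2 hA
  have hvp : v p ≠ 0 := ne_zero_of_vecMul_eq_zero_of_det_submatrix_ne_zero hB hv hvA
  have hp : v p * (A *ᵥ w) p = 0 :=
    calc v p * (A *ᵥ w) p = v ⬝ᵥ A *ᵥ w := by simp [dotProduct, Fin.sum_univ_succAbove _ p, hw]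
      _ = 0 := by rw [dotProduct_mulVec, hvA, zero_dotProduct]
  exact funext ((Fin.forall_iff_succAbove p).2 ⟨(mul_eq_zero.1 hp).resolve_left hvp, hw⟩)

end Matrix

/-- The `k × k` Hankel matrix of the sequence `a` starting at index `m`. -/
def hankelMatrix {R : Type*} (a : ℕ → R) (m k : ℕ) : Matrix (Fin k) (Fin k) R :=
  fun i j => a (m + i + j)

/-- The action of polynomials on sequences in which `X` acts as the shift. Its vanishing at every
index is the linear recurrence with characteristic polynomial `p`, where the leading coefficient
of `p` need not be invertible. -/
def shiftAction {R : Type*} [Semiring R] (p : R[X]) (a : ℕ → R) (m : ℕ) : R :=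
  p.sum fun j c => c * a (m + j)

section Rational

variable {R : Type*}

lemma exists_eq_polynomial_coe_iff [Semiring R] {f : PowerSeries R} :
    (∃ P : R[X], f = (P : PowerSeries R)) ↔ ∀ᶠ n in atTop, PowerSeries.coeff n f = 0 := by
  constructor
  · rintro ⟨P, rfl⟩
    filter_upwards [eventually_gt_atTop P.natDegree] with n hn
    rw [Polynomial.coeff_coe, coeff_eq_zero_of_natDegree_lt hn]
  · intro h
    obtain ⟨N, hN⟩ := eventually_atTop.1 h
    refine ⟨PowerSeries.trunc N f, PowerSeries.ext fun n => ?_⟩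
    rw [Polynomial.coeff_coe, PowerSeries.coeff_trunc]
    split_ifs with hn
    · rfl
    · exact hN n (not_lt.1 hn)

lemma shiftAction_C_mul_X_pow [Semiring R] (c : R) (j : ℕ) (a : ℕ → R) (m : ℕ) :
    shiftAction (C c * X ^ j) a m = c * a (m + j) := by
  rw [shiftAction, C_mul_X_pow_eq_monomial, sum_monomial_index c _ (zero_mul _)]

lemma shiftAction_add [Semiring R] (p q : R[X]) (a : ℕ → R) (m : ℕ) :
    shiftAction (p + q) a m = shiftAction p a m + shiftAction q a m :=
  sum_add_index p q _ (fun _ => zero_mul _) (fun _ _ _ => add_mul _ _ _)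

lemma coeff_reflect_mul_mk [Semiring R] (a : ℕ → R) {p : R[X]} {N : ℕ} (hp : p.natDegree ≤ N)
    (m : ℕ) :
    PowerSeries.coeff (m + N) ((p.reflect N : R[X]) * PowerSeries.mk a : PowerSeries R) =
      shiftAction p a m := by
  refine induction_with_natDegree_le (fun p => PowerSeries.coeff (m + N)
    ((p.reflect N : R[X]) * PowerSeries.mk a : PowerSeries R) = shiftAction p a m) N
    (by simp [shiftAction]) (fun j c _ hj => ?monomial) (fun p q _ _ ihp ihq => ?add) p hp
  case monomial =>
    have hindex : m + N - (N - j) = m + j := by omega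
    rw [reflect_C_mul_X_pow, revAt_le hj, Polynomial.coe_mul, Polynomial.coe_C, Polynomial.coe_pow,
      Polynomial.coe_X, mul_assoc, PowerSeries.coeff_C_mul, PowerSeries.coeff_X_pow_mul',
      if_pos (by omega), PowerSeries.coeff_mk, hindex, shiftAction_C_mul_X_pow]
  case add =>
    rw [reflect_add, Polynomial.coe_add, add_mul, map_add, ihp, ihq, shiftAction_add]

lemma exists_reflect_mul_mk_eq_coe_iff [Semiring R] (a : ℕ → R) {p : R[X]} {N : ℕ}
    (hp : p.natDegree ≤ N) :
    (∃ P : R[X], (p.reflect N : R[X]) * PowerSeries.mk a = (P : PowerSeries R)) ↔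
      ∀ᶠ m in atTop, shiftAction p a m = 0 := by
  simp only [exists_eq_polynomial_coe_iff, ← coeff_reflect_mul_mk a hp]
  rw [← eventually_map (m := (· + N)) (P := fun n => PowerSeries.coeff n _ = 0),
    map_add_atTop_eq_nat]

theorem rational_iff_exists_eventually_shiftAction_eq_zero [Semiring R] (a : ℕ → R) :
    (∃ P Q : R[X], Q ≠ 0 ∧ (Q : PowerSeries R) * PowerSeries.mk a = (P : PowerSeries R)) ↔
      ∃ p : R[X], p ≠ 0 ∧ ∀ᶠ m in atTop, shiftAction p a m = 0 := by
  constructor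
  · rintro ⟨P, Q, hQ, hPQ⟩
    have hdeg : (Q.reflect Q.natDegree).natDegree ≤ Q.natDegree := Q.reverse_natDegree_le
    refine ⟨Q.reflect Q.natDegree, reflect_eq_zero_iff.not.2 hQ, ?_⟩
    exact (exists_reflect_mul_mk_eq_coe_iff a hdeg).1 ⟨P, by rwa [reflect_reflect]⟩
  · rintro ⟨p, hp, h⟩
    obtain ⟨P, hP⟩ := (exists_reflect_mul_mk_eq_coe_iff a le_rfl).2 h
    exact ⟨P, p.reflect p.natDegree, reflect_eq_zero_iff.not.2 hp, hP⟩

end Rational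

section Hankel

variable {R : Type*} {a : ℕ → R} {m k : ℕ}

lemma hankelMatrix_submatrix_castSucc_castSucc :
    (hankelMatrix a m (k + 1)).submatrix Fin.castSucc Fin.castSucc = hankelMatrix a m k :=
  rfl

lemma hankelMatrix_submatrix_castSucc_succ :
    (hankelMatrix a m (k + 1)).submatrix Fin.castSucc Fin.succ = hankelMatrix a (m + 1) k := by
  ext i j
  simp [hankelMatrix, add_assoc, add_left_comm, add_comm]

lemma hankelMatrix_submatrix_succ_castSucc :
    (hankelMatrix a m (k + 1)).submatrix Fin.succ Fin.castSucc = hankelMatrix a (m + 1) k := by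
  ext i j
  simp [hankelMatrix, add_left_comm, add_comm]

lemma hankelMatrix_succ_mulVec_castSucc [NonUnitalNonAssocSemiring R] (w : Fin (k + 1) → R)
    (i : Fin k) :
    (hankelMatrix a (m + 1) (k + 1) *ᵥ w) i.castSucc =
      (hankelMatrix a m (k + 1) *ᵥ w) i.succ := by
  simp [hankelMatrix, mulVec, add_left_comm, add_comm]

lemma hankelMatrix_mulVec_toFn [CommSemiring R] {p : R[X]} (hp : p.degree < k) (i : Fin k) :
    (hankelMatrix a m k *ᵥ toFn k p) i = shiftAction p a (m + i) := by
  rw [shiftAction, ← sum_fin _ (by simp) hp]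
  simp [hankelMatrix, mulVec, dotProduct, mul_comm, toFn]

variable [CommRing R] [IsDomain R]

lemma det_hankelMatrix_succ_eq_zero (hk : (hankelMatrix a m k).det = 0)
    (hk' : (hankelMatrix a m (k + 1)).det = 0) : (hankelMatrix a (m + 1) k).det = 0 := by
  by_contra hne
  obtain ⟨u, hu, hHu⟩ := exists_mulVec_eq_zero_iff.2 hk
  have hker : hankelMatrix a m (k + 1) *ᵥ (Fin.snoc u 0 : Fin (k + 1) → R) = 0 := by
    refine mulVec_eq_zero_of_det_submatrix_ne_zero hk' (p := Fin.last k) (e := Fin.succ) ?_ ?_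
    · rwa [Fin.succAbove_last, hankelMatrix_submatrix_castSucc_succ]
    · intro i
      rw [Fin.succAbove_last, ← submatrix_castSucc_mulVec,
        hankelMatrix_submatrix_castSucc_castSucc, hHu, Pi.zero_apply]
  refine hu (eq_zero_of_mulVec_eq_zero hne (funext fun i => ?_))
  rw [← hankelMatrix_submatrix_succ_castSucc, submatrix_castSucc_mulVec, hker, Pi.zero_apply,
    Pi.zero_apply]

lemma hankelMatrix_succ_mulVec_eq_zero (hne : (hankelMatrix a (m + 1) k).det ≠ 0)
    (hdet : (hankelMatrix a (m + 1) (k + 1)).det = 0) {w : Fin (k + 1) → R}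
    (hw : hankelMatrix a m (k + 1) *ᵥ w = 0) : hankelMatrix a (m + 1) (k + 1) *ᵥ w = 0 := by
  refine mulVec_eq_zero_of_det_submatrix_ne_zero hdet (p := Fin.last k) (e := Fin.castSucc) ?_ ?_
  · rwa [Fin.succAbove_last, hankelMatrix_submatrix_castSucc_castSucc]
  · intro i
    rw [Fin.succAbove_last, hankelMatrix_succ_mulVec_castSucc, hw, Pi.zero_apply]

lemma eventually_det_hankelMatrix_eq_zero_of_frequently
    (hsucc : ∀ᶠ m in atTop, (hankelMatrix a m (k + 1)).det = 0)
    (hfreq : ∃ᶠ m in atTop, (hankelMatrix a m k).det = 0) :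
    ∀ᶠ m in atTop, (hankelMatrix a m k).det = 0 := by
  obtain ⟨m₀, hm₀, hvan⟩ := (hfreq.and_eventually (eventually_forall_ge_atTop.2 hsucc)).exists
  refine eventually_atTop.2 ⟨m₀, fun m hm => ?_⟩
  induction m, hm using Nat.le_induction with
  | base => exact hm₀
  | succ m hm ih => exact det_hankelMatrix_succ_eq_zero ih (hvan m hm)

lemma exists_eventually_det_hankelMatrix_ne_zero
    (h : ∀ᶠ m in atTop, (hankelMatrix a m k).det = 0) :
    ∃ r, ∀ᶠ m in atTop, (hankelMatrix a m r).det ≠ 0 ∧ (hankelMatrix a m (r + 1)).det = 0 := by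
  induction k with
  | zero => simpa using h.exists
  | succ k ih =>
    by_cases hfreq : ∃ᶠ m in atTop, (hankelMatrix a m k).det = 0
    · exact ih (eventually_det_hankelMatrix_eq_zero_of_frequently h hfreq)
    · exact ⟨k, (not_frequently.1 hfreq).and h⟩

lemma exists_eventually_hankelMatrix_mulVec_eq_zero
    (h : ∀ᶠ m in atTop, (hankelMatrix a m k).det ≠ 0 ∧ (hankelMatrix a m (k + 1)).det = 0) :
    ∃ w ≠ 0, ∀ᶠ m in atTop, hankelMatrix a m (k + 1) *ᵥ w = 0 := by
  obtain ⟨M, hM⟩ := eventually_atTop.1 h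
  obtain ⟨w, hw, hMw⟩ := exists_mulVec_eq_zero_iff.2 (hM M le_rfl).2
  refine ⟨w, hw, eventually_atTop.2 ⟨M, fun m hm => ?_⟩⟩
  induction m, hm using Nat.le_induction with
  | base => exact hMw
  | succ m hm ih =>
    obtain ⟨hne, hdet⟩ := hM (m + 1) (Nat.le_succ_of_le hm)
    exact hankelMatrix_succ_mulVec_eq_zero hne hdet ih

theorem exists_eventually_shiftAction_eq_zero
    (h : ∀ᶠ m in atTop, (hankelMatrix a m k).det = 0) :
    ∃ p : R[X], p ≠ 0 ∧ ∀ᶠ m in atTop, shiftAction p a m = 0 := by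
  classical
  obtain ⟨r, hr⟩ := exists_eventually_det_hankelMatrix_ne_zero h
  obtain ⟨w, hw, hker⟩ := exists_eventually_hankelMatrix_mulVec_eq_zero hr
  have hto : toFn (r + 1) (ofFn (r + 1) w) = w := toFn_comp_ofFn_eq_id _ w
  refine ⟨ofFn (r + 1) w, fun h0 => hw (by rw [← hto, h0, map_zero]), hker.mono fun m hm => ?_⟩
  simpa [hto, hm] using (hankelMatrix_mulVec_toFn (a := a) (m := m) (ofFn_degree_lt w) 0).symm

theorem eventually_det_hankelMatrix_eq_zero {p : R[X]} (hp : p ≠ 0) (hk : p.natDegree < k)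
    (h : ∀ᶠ m in atTop, shiftAction p a m = 0) :
    ∀ᶠ m in atTop, (hankelMatrix a m k).det = 0 := by
  classical
  filter_upwards [eventually_forall_ge_atTop.2 h] with m hm
  refine exists_mulVec_eq_zero_iff.1 ⟨toFn k p, fun h0 => hp ?_, funext fun i => ?_⟩
  · rw [← ofFn_comp_toFn_eq_id_of_natDegree_lt hk, h0, map_zero]
  · exact (hankelMatrix_mulVec_toFn (natDegree_lt_iff_degree_lt hp |>.1 hk) i).trans
      (hm _ (Nat.le_add_right m i))

end Hankel

theorem powerSeries_rational_iff_hankel_det_eq_zero_general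
    {R : Type*} [CommRing R] [IsDomain R] (a : ℕ → R) :
    (∃ P Q : R[X], Q ≠ 0 ∧ (Q : PowerSeries R) * PowerSeries.mk a = (P : PowerSeries R)) ↔
      ∃ n > 0, ∃ n₀ > 0, ∀ m > n₀, (hankelMatrix a m (n + 1)).det = 0 := by
  rw [rational_iff_exists_eventually_shiftAction_eq_zero]
  constructor
  · rintro ⟨p, hp, h⟩
    have hdet := eventually_det_hankelMatrix_eq_zero (k := p.natDegree + 2) hp (by omega) h
    obtain ⟨N, hN⟩ := eventually_atTop.1 hdet
    exact ⟨p.natDegree + 1, by omega, N + 1, by omega, fun m hm => hN m (by omega)⟩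
  · rintro ⟨n, -, n₀, -, h⟩
    exact exists_eventually_shiftAction_eq_zero ((eventually_gt_atTop n₀).mono h)

/-- A formal power series `f = Σ aᵢ tⁱ` over a field `K` is rational (i.e. `Q·f = P`
for some polynomials `P, Q` with `Q ≠ 0`) if and only if there exist `n > 0` and
`n₀ > 0` such that for all `m > n₀` the Hankel determinant
`det (a_{m+i+j})_{0 ≤ i,j ≤ n}` vanishes. -/
theorem powerSeries_rational_iff_hankel_det_eq_zero
    {K : Type*} [Field K] (a : ℕ → K) :
    (∃ P Q : Polynomial K, Q ≠ 0 ∧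
        (Q : PowerSeries K) * PowerSeries.mk a = (P : PowerSeries K)) ↔
      ∃ n > 0, ∃ n₀ > 0, ∀ m > n₀,
        Matrix.det (fun i j : Fin (n + 1) => a (m + i + j)) = 0 :=
  powerSeries_rational_iff_hankel_det_eq_zero_general a
end

section
/- Let n ∈ ℕ and let σ be a permutation of {0, 1, …, n}. If the multiset {j + σ(j) : j = 0, …, n} equals the multiset {2j : j = 0, …, n}, then σ is the identity permutation. -/
/-!
We have `(a + b)² ≤ 2 (a² + b²)`, with equality only for `a = b`. Sum this over the pairs
`(j, σ j)`: the left side becomes `∑ (2j)²` by the equality of multisets, and the right side becomes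
`4 ∑ j²` because `σ` permutes the squares. Hence equality holds for every pair.
-/

section

variable {ι R : Type*} [CommSemiring R] [LinearOrder R] [IsStrictOrderedRing R] [ExistsAddOfLE R]

theorem add_sq_eq_two_mul_add_sq_iff {a b : R} : (a + b) ^ 2 = 2 * (a ^ 2 + b ^ 2) ↔ a = b := by
  refine ⟨fun h => ?_, fun h => by subst h; ring⟩
  have cross_eq : a * b + b * a = a * a + b * b :=
    add_left_cancel (a := a ^ 2 + b ^ 2) (by linear_combination h)
  rcases lt_trichotomy a b with hab | hab | hba
  · exact absurd cross_eq (mul_add_mul_lt_mul_add_mul hab hab).ne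
  · exact hab
  · exact absurd cross_eq (mul_add_mul_lt_mul_add_mul' hba hba).ne

theorem sum_add_sq_eq_two_mul_iff_eqOn {s : Finset ι} {f g : ι → R} :
    ∑ i ∈ s, (f i + g i) ^ 2 = 2 * (∑ i ∈ s, f i ^ 2 + ∑ i ∈ s, g i ^ 2) ↔ Set.EqOn f g s := by
  rw [← Finset.sum_add_distrib, Finset.mul_sum,
    Finset.sum_eq_sum_iff_of_le fun _ _ => add_sq_le]
  exact forall₂_congr fun _ _ => add_sq_eq_two_mul_add_sq_iff

variable [Fintype ι]

theorem comp_perm_eq_of_multiset_add_eq (f : ι → R) (σ : Equiv.Perm ι)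
    (h : Multiset.map (fun i => f i + f (σ i)) Finset.univ.val =
      Multiset.map (fun i => 2 * f i) Finset.univ.val) :
    f ∘ σ = f := by
  have sum_sq_eq : ∑ i, (f i + f (σ i)) ^ 2 = ∑ i, (2 * f i) ^ 2 := by
    simpa only [Finset.sum, Multiset.map_map, Function.comp_def] using
      congrArg (fun s : Multiset R => (s.map (· ^ 2)).sum) h
  have sum_sq_comp : ∑ i, f (σ i) ^ 2 = ∑ i, f i ^ 2 := Equiv.sum_comp σ (f · ^ 2)
  have equality_case :
      ∑ i, (f i + f (σ i)) ^ 2 = 2 * (∑ i, f i ^ 2 + ∑ i, f (σ i) ^ 2) := by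
    simp only [sum_sq_eq, sum_sq_comp, mul_pow, ← Finset.mul_sum]
    ring
  funext i
  exact (sum_add_sq_eq_two_mul_iff_eqOn.mp equality_case (Finset.mem_univ i)).symm

theorem perm_eq_one_of_multiset_add_eq_general {f : ι → R} (hf : Function.Injective f)
    (σ : Equiv.Perm ι)
    (h : Multiset.map (fun i => f i + f (σ i)) Finset.univ.val =
      Multiset.map (fun i => 2 * f i) Finset.univ.val) :
    σ = 1 :=
  Equiv.ext fun i => hf (congrFun (comp_perm_eq_of_multiset_add_eq f σ h) i)

end

/-- If `σ` is a permutation of `{0, …, n}` such that the multiset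
`{j + σ(j) : j = 0, …, n}` equals the multiset `{2j : j = 0, …, n}`,
then `σ` is the identity. -/
theorem perm_eq_one_of_multiset_add_eq (n : ℕ) (σ : Equiv.Perm (Fin (n + 1)))
    (h : Multiset.map (fun j : Fin (n + 1) => (j : ℕ) + (σ j : ℕ)) Finset.univ.val =
         Multiset.map (fun j : Fin (n + 1) => 2 * (j : ℕ)) Finset.univ.val) :
    σ = 1 :=
  perm_eq_one_of_multiset_add_eq_general Fin.val_injective σ h
end

section
/- Let r ≥ 2 be a natural number, N ≥ 1 a natural number, and let c_1, …, c_N and d_1, …, d_N be integers. If the polynomial identity ∏_{j=1}^{N} ∏_{k=0}^{r−2} (X + c_j + k) = ∏_{j=1}^{N} ∏_{k=0}^{r−2} (X + d_j + k) holds in ℤ[X], then the multiset {c_1, …, c_N} equals the multiset {d_1, …, d_N}. -/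
/-!
Each factor chain is a translate `q(X + a)` of one rising factorial `q`, and more generally any
nonconstant `q` over a domain of characteristic zero will do. The roots of `∏_{a ∈ s} q(X + a)` are
the sums `-a + x` with `a ∈ s` and `x` a root of `q`. If multisets are encoded as formal sums
`∑ T^a`, this root multiset is therefore the product of the encodings of `-s` and of the roots of
`q`. The second factor is nonzero over an algebraically closed field, where `q` has a root, and it
can be cancelled: the additive group of such a field is a `ℚ`-vector space, hence has unique sums.
-/

section FormalSum

variable {A : Type*}

open Classical in
/-- The formal sum `∑_{a ∈ s} T^a` of a multiset `s`, as an element of the monoid algebra of `A`.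
The coefficients are taken in `ℕ`, which makes the correspondence with multisets bijective. -/
noncomputable def formalSum : Multiset A ≃+ AddMonoidAlgebra ℕ A :=
  Multiset.toFinsupp.trans AddMonoidAlgebra.coeffAddEquiv.symm

theorem formalSum_singleton (a : A) : formalSum {a} = AddMonoidAlgebra.single a 1 := by
  classical
  simp [formalSum, AddMonoidAlgebra.ofCoeff_single]

variable [Add A]

theorem formalSum_map_add_left (a : A) (u : Multiset A) :
    formalSum (u.map (a + ·)) = AddMonoidAlgebra.single a 1 * formalSum u := by
  induction u using Multiset.induction with
  | empty => simp
  | cons b u ih =>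
    rw [Multiset.map_cons, ← Multiset.singleton_add, ← Multiset.singleton_add, map_add, ih, map_add,
      formalSum_singleton, formalSum_singleton, mul_add, AddMonoidAlgebra.single_mul_single,
      one_mul]

theorem formalSum_bind_map_add (s u : Multiset A) :
    formalSum (s.bind fun a => u.map (a + ·)) = formalSum s * formalSum u := by
  induction s using Multiset.induction with
  | empty => simp
  | cons a s ih =>
    rw [Multiset.cons_bind, map_add, ih, formalSum_map_add_left, ← Multiset.singleton_add,
      map_add, formalSum_singleton, add_mul]

theorem bind_map_add_injective [UniqueSums A] {u : Multiset A} (hu : u ≠ 0) :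
    Function.Injective fun s : Multiset A => s.bind fun a => u.map (a + ·) := by
  intro s t h
  have hmul : formalSum s * formalSum u = formalSum t * formalSum u := by
    simpa only [formalSum_bind_map_add] using congrArg formalSum h
  have hu' : formalSum u ≠ 0 := (map_ne_zero_iff formalSum formalSum.injective).mpr hu
  exact formalSum.injective (mul_right_cancel₀ hu' hmul)

end FormalSum

section Taylor

open Polynomial

variable {R : Type*} [CommRing R] [IsDomain R]

theorem roots_taylor (q : R[X]) (a : R) : (taylor a q).roots = q.roots.map (-a + ·) := by
  simpa [taylor_apply, sub_eq_neg_add] using roots_comp_C_mul_X_add_C q 1 a isUnit_one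

theorem roots_prod_map_taylor {q : R[X]} (hq : q ≠ 0) (s : Multiset R) :
    (s.map (taylor · q)).prod.roots = (s.map Neg.neg).bind fun a => q.roots.map (a + ·) := by
  have h0 : (0 : R[X]) ∉ s.map (taylor · q) := by simp [hq]
  simp only [roots_multiset_prod _ h0, Multiset.bind_map, roots_taylor]

theorem prod_map_taylor_injective_of_roots_ne_zero [UniqueSums R] {q : R[X]} (hq : q.roots ≠ 0) :
    Function.Injective fun s : Multiset R => (s.map (taylor · q)).prod := by
  intro s t h
  have hq0 : q ≠ 0 := by
    rintro rfl
    exact hq roots_zero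
  have hroots := congrArg roots h
  simp only [roots_prod_map_taylor hq0] at hroots
  exact Multiset.map_injective neg_injective (bind_map_add_injective hq hroots)

theorem map_prod_map_taylor {S T : Type*} [CommSemiring S] [CommSemiring T] (φ : S →+* T)
    (q : S[X]) (s : Multiset S) :
    (s.map (taylor · q)).prod.map φ = ((s.map φ).map (taylor · (q.map φ))).prod := by
  simp only [Polynomial.map_multiset_prod, Multiset.map_map, Function.comp_def, map_taylor]

theorem multiset_eq_of_prod_shifted_factors_eq_general [CharZero R] {q : R[X]}
    (hq : q.natDegree ≠ 0) {s t : Multiset R}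
    (h : (s.map (taylor · q)).prod = (t.map (taylor · q)).prod) : s = t := by
  let K := AlgebraicClosure (FractionRing R)
  let φ : R →+* K := (algebraMap (FractionRing R) K).comp (algebraMap R (FractionRing R))
  have hφ : Function.Injective φ :=
    (algebraMap (FractionRing R) K).injective.comp (IsFractionRing.injective R (FractionRing R))
  have : CharZero K := charZero_of_injective_ringHom hφ
  have hroots : (q.map φ).roots ≠ 0 := by
    rwa [Ne, IsAlgClosed.roots_eq_zero_iff_natDegree_eq_zero, natDegree_map_eq_of_injective hφ]
  apply Multiset.map_injective hφ
  apply prod_map_taylor_injective_of_roots_ne_zero hroots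
  simp only [← map_prod_map_taylor, h]

theorem taylor_ascPochhammer {S : Type*} [CommSemiring S] (a : S) (n : ℕ) :
    taylor a (ascPochhammer S n) = ∏ k ∈ Finset.range n, (X + C (a + (k : S))) := by
  induction n with
  | zero => simp
  | succ n ih =>
    rw [ascPochhammer_succ_right, taylor_mul, ih, Finset.prod_range_succ, map_add, taylor_X,
      ← C_eq_natCast, taylor_C, add_assoc, ← C_add]

end Taylor

open Polynomial in
/-- If `r ≥ 2`, `N ≥ 1`, and the products of chains of shifted linear factors
`∏_j ∏_{k=0}^{r-2} (X + c_j + k)` and `∏_j ∏_{k=0}^{r-2} (X + d_j + k)` coincide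
in `ℤ[X]`, then the multisets `{c_1, …, c_N}` and `{d_1, …, d_N}` coincide. -/
theorem multiset_eq_of_prod_shifted_factors_eq (r N : ℕ) (hr : 2 ≤ r) (hN : 1 ≤ N)
    (c d : Fin N → ℤ)
    (h : (∏ j, ∏ k ∈ Finset.range (r - 1), (X + C (c j + (k : ℤ)))) =
         (∏ j, ∏ k ∈ Finset.range (r - 1), (X + C (d j + (k : ℤ))))) :
    Multiset.map c Finset.univ.val = Multiset.map d Finset.univ.val := by
  have hq : (ascPochhammer ℤ (r - 1)).natDegree ≠ 0 := by rw [ascPochhammer_natDegree]; lia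
  exact multiset_eq_of_prod_shifted_factors_eq_general hq <| by
    simpa only [Multiset.map_map, Function.comp_def, taylor_ascPochhammer, Finset.prod_map_val]
end

section
/- Let r ≥ 2 and n be natural numbers. Then there exists a natural number m > 0 such that for every permutation σ of {0, 1, …, n}: if ∏_{j=0}^{n} binom(r − 1 + m + j + σ(j), r − 1) = ∏_{j=0}^{n} binom(r − 1 + m + 2j, r − 1), then σ is the identity permutation. -/
/-! The sequence `x ↦ C(k + x, k)` is strictly log-concave, so for `i ≠ j` the value at `m + i + j`
squared exceeds the product of the values at `m + 2i` and `m + 2j`. Since `j` and `σ j` both run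
over all indices, multiplying these inequalities over the pairs `(j, σ j)` compares the squares of
the two products in question: the one for `σ` is strictly larger as soon as `σ` moves a point. -/

theorem ascFactorial_mul_ascFactorial_lt {a b k : ℕ} (ha : a ≠ 0) (hb : b ≠ 0) (hk : k ≠ 0)
    (x : ℕ) :
    x.ascFactorial k * (x + a + b).ascFactorial k <
      (x + a).ascFactorial k * (x + b).ascFactorial k := by
  have factor_lt (y : ℕ) : y * (y + a + b) < (y + a) * (y + b) := by
    nlinarith [mul_pos (Nat.pos_of_ne_zero ha) (Nat.pos_of_ne_zero hb)]
  replace hk : 1 ≤ k := Nat.one_le_iff_ne_zero.mpr hk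
  induction k, hk using Nat.le_induction with
  | base => simpa only [Nat.ascFactorial_succ, Nat.ascFactorial_zero, add_zero, mul_one]
      using factor_lt x
  | succ k _ ih =>
    calc x.ascFactorial (k + 1) * (x + a + b).ascFactorial (k + 1)
      _ = (x + k) * (x + k + a + b) * (x.ascFactorial k * (x + a + b).ascFactorial k) := by
        simp only [Nat.ascFactorial_succ]; ring
      _ < (x + k + a) * (x + k + b) * ((x + a).ascFactorial k * (x + b).ascFactorial k) :=
        mul_lt_mul'' (factor_lt (x + k)) ih (Nat.zero_le _) (Nat.zero_le _)
      _ = (x + a).ascFactorial (k + 1) * (x + b).ascFactorial (k + 1) := by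
        simp only [Nat.ascFactorial_succ]; ring

theorem choose_mul_choose_lt_choose_mul_choose {a b k : ℕ} (ha : a ≠ 0) (hb : b ≠ 0) (hk : k ≠ 0)
    (x : ℕ) :
    (k + x).choose k * (k + (x + a + b)).choose k <
      (k + (x + a)).choose k * (k + (x + b)).choose k := by
  have factorial_mul_choose (y : ℕ) : k.factorial * (k + y).choose k = (y + 1).ascFactorial k := by
    rw [add_comm k y, Nat.ascFactorial_eq_factorial_mul_choose]
  refine lt_of_mul_lt_mul_left (a := k.factorial * k.factorial) ?_ (Nat.zero_le _)
  simp only [mul_mul_mul_comm k.factorial, factorial_mul_choose]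
  simpa only [add_right_comm _ 1] using ascFactorial_mul_ascFactorial_lt ha hb hk (x + 1)

theorem choose_two_mul_mul_choose_two_mul_lt_sq {i j k : ℕ} (hij : i ≠ j) (hk : k ≠ 0) (m : ℕ) :
    (k + m + 2 * i).choose k * (k + m + 2 * j).choose k < (k + m + i + j).choose k ^ 2 := by
  wlog h : i < j generalizing i j
  · rw [mul_comm, add_right_comm _ i j]
    exact this hij.symm (hij.lt_or_gt.resolve_left h)
  obtain ⟨d, rfl⟩ := Nat.exists_eq_add_of_le h.le
  have hd : d ≠ 0 := by omega
  convert choose_mul_choose_lt_choose_mul_choose hd hd hk (m + 2 * i) using 1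
  · congr 2 <;> ring
  · rw [sq]
    congr 2 <;> ring

theorem prod_diag_lt_prod_perm {ι R : Type*} [Fintype ι] [CommSemiring R] [LinearOrder R]
    [IsStrictOrderedRing R] {w : ι → ι → R} (hpos : ∀ i, 0 < w i i) (hnonneg : ∀ i j, 0 ≤ w i j)
    (hw : ∀ i j, i ≠ j → w i i * w j j < w i j ^ 2) {σ : Equiv.Perm ι} (hσ : σ ≠ 1) :
    ∏ i, w i i < ∏ i, w i (σ i) := by
  obtain ⟨a, ha⟩ : ∃ a, σ a ≠ a := not_forall.mp fun hfix => hσ (Equiv.ext hfix)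
  have le_sq (i : ι) : w i i * w (σ i) (σ i) ≤ w i (σ i) ^ 2 := by
    rcases eq_or_ne (σ i) i with hi | hi
    · rw [hi, sq]
    · exact (hw i (σ i) hi.symm).le
  refine lt_of_pow_lt_pow_left₀ 2 (Finset.prod_nonneg fun i _ => hnonneg i (σ i)) ?_
  calc (∏ i, w i i) ^ 2
    _ = ∏ i, w i i * w (σ i) (σ i) := by
      rw [Finset.prod_mul_distrib, Equiv.prod_comp σ fun i => w i i, sq]
    _ < ∏ i, w i (σ i) ^ 2 :=
      Finset.prod_lt_prod (fun i _ => mul_pos (hpos i) (hpos (σ i))) (fun i _ => le_sq i)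
        ⟨a, Finset.mem_univ a, hw a (σ a) ha.symm⟩
    _ = (∏ i, w i (σ i)) ^ 2 := Finset.prod_pow _ _ _

theorem exists_m_binomial_products_detect_identity_general {ι : Type*} [Fintype ι] {f : ι → ℕ}
    (hf : Function.Injective f) {k : ℕ} (hk : k ≠ 0) (m : ℕ) (σ : Equiv.Perm ι)
    (h : ∏ j, (k + m + f j + f (σ j)).choose k = ∏ j, (k + m + 2 * f j).choose k) : σ = 1 := by
  have diag (j : ι) : k + m + f j + f j = k + m + 2 * f j := by ring
  by_contra hσ
  have hlt : ∏ j, (k + m + f j + f j).choose k < ∏ j, (k + m + f j + f (σ j)).choose k := by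
    refine prod_diag_lt_prod_perm (w := fun i j => (k + m + f i + f j).choose k)
      (fun i => Nat.choose_pos (by omega)) (fun _ _ => Nat.zero_le _) (fun i j hij => ?_) hσ
    simpa only [diag] using choose_two_mul_mul_choose_two_mul_lt_sq (hf.ne hij) hk m
  simp only [diag] at hlt
  exact hlt.ne' h

/-- For `r ≥ 2` and any `n`, there exists `m > 0` such that for every permutation
`σ` of `{0, …, n}`, the equality of products of binomial coefficients
`∏_j C(r−1+m+j+σ(j), r−1) = ∏_j C(r−1+m+2j, r−1)` forces `σ` to be the identity. -/
theorem exists_m_binomial_products_detect_identity (r n : ℕ) (hr : 2 ≤ r) :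
    ∃ m > 0, ∀ σ : Equiv.Perm (Fin (n + 1)),
      (∏ j : Fin (n + 1), Nat.choose (r - 1 + m + (j : ℕ) + (σ j : ℕ)) (r - 1)) =
        (∏ j : Fin (n + 1), Nat.choose (r - 1 + m + 2 * (j : ℕ)) (r - 1)) →
      σ = 1 :=
  ⟨1, one_pos, exists_m_binomial_products_detect_identity_general Fin.val_injective
    (Nat.sub_ne_zero_of_lt hr) 1⟩
end
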